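/- Let ω and ν be radial weights such that P_ω : L^∞_ν̂ → H^∞_ν̂ is bounded, and suppose that ω ∈ D̂ or ν ∈ D̂. Then both ω ∈ D and ν ∈ D. -/

import Mathlib

open MeasureTheory Set Complex
open scoped ENNReal

noncomputable section

/-- The open unit disc in the complex plane. -/
def unitDisc : Set ℂ := Metric.ball 0 1

/-- Tail integral `ω̂(r) = ∫_r^1 ω(s) ds`. -/
def tl (ω : ℝ → ℝ) (r : ℝ) : ℝ := ∫ s in r..1, ω s

/-- Moment `ω_x = ∫_0^1 s^x ω(s) ds` (real power in the exponent). -/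
def mom (ω : ℝ → ℝ) (x : ℝ) : ℝ := ∫ s in (0:ℝ)..1, s ^ x * ω s

/-- `ω` is a radial weight: nonnegative and integrable on `[0,1)`, with positive
tail integrals. -/
def IsRadialWeight (ω : ℝ → ℝ) : Prop :=
  (∀ s ∈ Ico (0:ℝ) 1, 0 ≤ ω s) ∧ IntegrableOn ω (Ico (0:ℝ) 1) ∧
    ∀ r ∈ Ico (0:ℝ) 1, 0 < tl ω r

/-- The upper doubling class `D̂`: `sup_{0≤r<1} ω̂(r)/ω̂((1+r)/2) < ∞`. -/
def Dhat (ω : ℝ → ℝ) : Prop :=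
  ∃ C : ℝ, ∀ r ∈ Ico (0:ℝ) 1, tl ω r ≤ C * tl ω ((1 + r) / 2)

/-- The class `Ď`: there are `K > 1`, `C > 1` with `ω̂(r) ≥ C ω̂(1 - (1-r)/K)`. -/
def Dcheck (ω : ℝ → ℝ) : Prop :=
  ∃ K C : ℝ, 1 < K ∧ 1 < C ∧ ∀ r ∈ Ico (0:ℝ) 1, C * tl ω (1 - (1 - r) / K) ≤ tl ω r

/-- The class `D = D̂ ∩ Ď`. -/
def DD (ω : ℝ → ℝ) : Prop := Dhat ω ∧ Dcheck ω

/-- The Bergman reproducing kernel `B^ω_z(ζ) = Σ_n (conj z · ζ)^n / (2 ω_{2n+1})`. -/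
def bKer (ω : ℝ → ℝ) (z ζ : ℂ) : ℂ :=
  ∑' n : ℕ, (starRingEnd ℂ z * ζ) ^ n / ((2 * mom ω (2 * (n : ℝ) + 1) : ℝ) : ℂ)

/-- The integrand of the Bergman projection. -/
def bInt (ω : ℝ → ℝ) (f : ℂ → ℂ) (z ζ : ℂ) : ℂ :=
  f ζ * starRingEnd ℂ (bKer ω z ζ) * ((ω ‖ζ‖ : ℝ) : ℂ)

/-- The Bergman projection `P_ω f(z) = ∫_𝔻 f(ζ) conj(B^ω_z(ζ)) ω(ζ) dA(ζ)`,
where `dA` is normalized area measure `dx dy / π`. -/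
def bProj (ω : ℝ → ℝ) (f : ℂ → ℂ) (z : ℂ) : ℂ :=
  (Real.pi : ℂ)⁻¹ * ∫ ζ in unitDisc, bInt ω f z ζ

/-- The weighted sup-norm `ess sup_{z ∈ 𝔻} |f(z)| v(|z|)`, valued in `ℝ≥0∞`. -/
def wSup (v : ℝ → ℝ) (f : ℂ → ℂ) : ℝ≥0∞ :=
  essSup (fun z => ENNReal.ofReal (‖f z‖ * v ‖z‖)) (volume.restrict unitDisc)

/-- `P_ω : L^∞_v → H^∞_v` is bounded: there is `C > 0` so that for every
`f ∈ L^∞_v` the defining integral converges absolutely at every point of `𝔻`,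
`P_ω f` is analytic on `𝔻`, and `‖P_ω f‖_{L^∞_v} ≤ C ‖f‖_{L^∞_v}`. -/
def ProjBddH (ω v : ℝ → ℝ) : Prop :=
  ∃ C : ℝ, 0 < C ∧ ∀ f : ℂ → ℂ,
    AEStronglyMeasurable f (volume.restrict unitDisc) → wSup v f < ⊤ →
    (∀ z ∈ unitDisc, IntegrableOn (bInt ω f z) unitDisc) ∧
    DifferentiableOn ℂ (bProj ω f) unitDisc ∧
    wSup v (bProj ω f) ≤ ENNReal.ofReal C * wSup v f

/-- `P_ω : L^∞_v → B^∞_v` is bounded: there is `C > 0` so that for every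
`f ∈ L^∞_v` the defining integral converges absolutely at every point of `𝔻`,
`P_ω f` is analytic on `𝔻`, and `‖P_ω f‖_{B^∞_v} ≤ C ‖f‖_{L^∞_v}`. -/
def ProjBddB (ω v : ℝ → ℝ) : Prop :=
  ∃ C : ℝ, 0 < C ∧ ∀ f : ℂ → ℂ,
    AEStronglyMeasurable f (volume.restrict unitDisc) → wSup v f < ⊤ →
    (∀ z ∈ unitDisc, IntegrableOn (bInt ω f z) unitDisc) ∧
    DifferentiableOn ℂ (bProj ω f) unitDisc ∧
    ∀ z ∈ unitDisc,
      ENNReal.ofReal ((1 - ‖z‖) * v ‖z‖ * ‖deriv (bProj ω f) z‖) ≤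
        ENNReal.ofReal C * wSup v f

/-- The moment condition `sup_{x ≥ 0} (ν_x / ω_{2x}) (ω/ν̂)_x < ∞`. -/
def MomCond (ω ν : ℝ → ℝ) : Prop :=
  ∃ C : ℝ, ∀ x : ℝ, 0 ≤ x →
    mom ν x / mom ω (2 * x) * mom (fun s => ω s / tl ν s) x ≤ C

/-- The tail condition `sup_{0 ≤ r < 1} (ν̂(r)/ω̂(r)) ∫_r^1 ω(s)/ν̂(s) ds < ∞`. -/
def TailCond (ω ν : ℝ → ℝ) : Prop :=
  ∃ C : ℝ, ∀ r ∈ Ico (0:ℝ) 1, tl ν r / tl ω r * tl (fun s => ω s / tl ν s) r ≤ C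

/-!
Write `q = ω / ν̂`. Testing `P_ω` on functions `h(θ) / ν̂(ρ)` in polar coordinates turns boundedness
into inequalities between the moments of `ω` and `q`, since `P_ω` multiplies the `n`-th Fourier
coefficient of `h` by `q_{n+1} / ω_{2n+1}`. Monomials `h(θ) = e^{inθ}` give
`r^n ν̂(r) q_{n+1} ≲ ω_{2n+1}`. Combined with the elementary bound `ω_{x+y} ≤ ν_x q_y`, this
transfers the doubling condition `D̂` from `ν` to `ω`; once `ω ∈ D̂`, it makes `ω̂ / ν̂` almost
decreasing, which transfers `D̂` from `ω` to `ν`. The sawtooth `h(θ) = θ` is bounded, but its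
Fourier coefficients sum like the harmonic series, and this logarithm forces
`ν̂(t) log((1 - r) / (1 - t)) ≲ ν̂(r)` for `r ≤ t`. That estimate implies `ν ∈ Ď`, and it passes
to `ω` because `ω̂ / ν̂` is almost decreasing.
-/

/-! ### Tails and moments -/

namespace IsRadialWeight

variable {ω : ℝ → ℝ}

lemma nonneg (hω : IsRadialWeight ω) {s : ℝ} (hs₀ : 0 ≤ s) (hs₁ : s < 1) : 0 ≤ ω s :=
  hω.1 s ⟨hs₀, hs₁⟩

lemma tl_pos (hω : IsRadialWeight ω) {r : ℝ} (hr₀ : 0 ≤ r) (hr₁ : r < 1) : 0 < tl ω r :=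
  hω.2.2 r ⟨hr₀, hr₁⟩

lemma intervalIntegrable (hω : IsRadialWeight ω) {a b : ℝ} (ha : a ∈ Icc (0 : ℝ) 1)
    (hb : b ∈ Icc (0 : ℝ) 1) : IntervalIntegrable ω volume a b := by
  have h : IntervalIntegrable ω volume 0 1 :=
    (intervalIntegrable_iff_integrableOn_Ico_of_le zero_le_one).2 hω.2.1
  refine h.mono_set ?_
  rw [uIcc_of_le zero_le_one]
  exact uIcc_subset_Icc ha hb

lemma intervalIntegrable_rpow_mul (hω : IsRadialWeight ω) {a b x : ℝ} (ha : a ∈ Icc (0 : ℝ) 1)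
    (hb : b ∈ Icc (0 : ℝ) 1) (hx : 0 ≤ x) :
    IntervalIntegrable (fun s => s ^ x * ω s) volume a b :=
  (hω.intervalIntegrable ha hb).continuousOn_mul (Real.continuous_rpow_const hx).continuousOn

lemma ae_nonneg_rpow_mul (hω : IsRadialWeight ω) (x : ℝ) :
    0 ≤ᵐ[volume.restrict (Ioc 0 1)] fun s => s ^ x * ω s := by
  rw [← Measure.restrict_congr_set Ioo_ae_eq_Ioc]
  filter_upwards [ae_restrict_mem measurableSet_Ioo] with s hs
  exact mul_nonneg (Real.rpow_nonneg hs.1.le x) (hω.nonneg hs.1.le hs.2)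

lemma tl_le_tl (hω : IsRadialWeight ω) {r t : ℝ} (hr : 0 ≤ r) (hrt : r ≤ t) (ht : t ≤ 1) :
    tl ω t ≤ tl ω r := by
  have h_nonneg : 0 ≤ᵐ[volume.restrict (Ioc 0 1)] ω := by
    simpa only [Real.rpow_zero, one_mul] using hω.ae_nonneg_rpow_mul 0
  exact intervalIntegral.integral_mono_interval hrt ht le_rfl
    (ae_restrict_of_ae_restrict_of_subset (Ioc_subset_Ioc_left hr) h_nonneg)
    (hω.intervalIntegrable ⟨hr, hrt.trans ht⟩ (right_mem_Icc.2 zero_le_one))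

lemma continuousOn_tl (hω : IsRadialWeight ω) : ContinuousOn (tl ω) (Icc 0 1) := by
  have hint : IntegrableOn ω (uIcc 0 1) := by
    rw [uIcc_of_le zero_le_one, integrableOn_Icc_iff_integrableOn_Ico]
    exact hω.2.1
  rw [← uIcc_of_le (zero_le_one' ℝ)]
  exact intervalIntegral.continuousOn_primitive_interval_left hint

lemma mom_antitone (hω : IsRadialWeight ω) {x y : ℝ} (hx : 0 ≤ x) (hxy : x ≤ y) :
    mom ω y ≤ mom ω x :=
  intervalIntegral.integral_mono_on_of_le_Ioo zero_le_one
    (hω.intervalIntegrable_rpow_mul (by simp) (by simp) (hx.trans hxy))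
    (hω.intervalIntegrable_rpow_mul (by simp) (by simp) hx) fun s hs =>
    mul_le_mul_of_nonneg_right (Real.rpow_le_rpow_of_exponent_ge hs.1 hs.2.le hxy)
      (hω.nonneg hs.1.le hs.2)

lemma rpow_mul_tl_le_mom (hω : IsRadialWeight ω) {r x : ℝ} (hr₀ : 0 ≤ r) (hr₁ : r ≤ 1)
    (hx : 0 ≤ x) : r ^ x * tl ω r ≤ mom ω x := by
  have hr : r ∈ Icc (0 : ℝ) 1 := ⟨hr₀, hr₁⟩
  calc r ^ x * tl ω r = ∫ s in r..1, r ^ x * ω s := (intervalIntegral.integral_const_mul _ _).symm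
    _ ≤ ∫ s in r..1, s ^ x * ω s :=
        intervalIntegral.integral_mono_on_of_le_Ioo hr₁
          ((hω.intervalIntegrable hr (by simp)).const_mul _)
          (hω.intervalIntegrable_rpow_mul hr (by simp) hx) fun s hs =>
          mul_le_mul_of_nonneg_right (Real.rpow_le_rpow hr₀ hs.1.le hx)
            (hω.nonneg (hr₀.trans hs.1.le) hs.2)
    _ ≤ mom ω x :=
        intervalIntegral.integral_mono_interval hr₀ hr₁ le_rfl (hω.ae_nonneg_rpow_mul x)
          (hω.intervalIntegrable_rpow_mul (by simp) (by simp) hx)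

lemma mom_pos (hω : IsRadialWeight ω) {x : ℝ} (hx : 0 ≤ x) : 0 < mom ω x :=
  have htail : 0 < tl ω (1 / 2) := hω.tl_pos one_half_pos.le one_half_lt_one
  (mul_pos (Real.rpow_pos_of_pos one_half_pos x) htail).trans_le
    (hω.rpow_mul_tl_le_mom one_half_pos.le one_half_lt_one.le hx)

lemma mom_le_tl_zero (hω : IsRadialWeight ω) {x : ℝ} (hx : 0 ≤ x) : mom ω x ≤ tl ω 0 := by
  simpa only [mom, tl, Real.rpow_zero, one_mul] using hω.mom_antitone le_rfl hx

lemma mom_add_le (hω : IsRadialWeight ω) {x y δ : ℝ} (hx : 0 ≤ x) (hy : 0 ≤ y) (hδ₀ : 0 ≤ δ)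
    (hδ₁ : δ ≤ 1) : mom ω (x + y) ≤ Real.exp (-(δ * y)) * mom ω x + tl ω (1 - δ) := by
  have hc : 1 - δ ∈ Icc (0 : ℝ) 1 := ⟨by linarith, by linarith⟩
  have h_zero : (0 : ℝ) ∈ Icc (0 : ℝ) 1 := by simp
  have h_one : (1 : ℝ) ∈ Icc (0 : ℝ) 1 := by simp
  have h_inner : ∫ s in 0..(1 - δ), s ^ (x + y) * ω s ≤ Real.exp (-(δ * y)) * mom ω x := calc
    _ ≤ ∫ s in 0..(1 - δ), Real.exp (-(δ * y)) * (s ^ x * ω s) := by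
        refine intervalIntegral.integral_mono_on_of_le_Ioo hc.1
          (hω.intervalIntegrable_rpow_mul h_zero hc (add_nonneg hx hy))
          ((hω.intervalIntegrable_rpow_mul h_zero hc hx).const_mul _) fun s hs => ?_
        have hs_exp : s ^ y ≤ Real.exp (-(δ * y)) := by
          rw [← neg_mul, Real.exp_mul]
          exact Real.rpow_le_rpow hs.1.le (hs.2.le.trans (Real.one_sub_le_exp_neg δ)) hy
        rw [Real.rpow_add hs.1, mul_comm (s ^ x), mul_assoc]
        exact mul_le_mul_of_nonneg_right hs_exp
          (mul_nonneg (Real.rpow_nonneg hs.1.le x) (hω.nonneg hs.1.le (hs.2.trans_le hc.2)))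
    _ = Real.exp (-(δ * y)) * ∫ s in 0..(1 - δ), s ^ x * ω s :=
        intervalIntegral.integral_const_mul _ _
    _ ≤ _ := by
        refine mul_le_mul_of_nonneg_left ?_ (Real.exp_pos _).le
        exact intervalIntegral.integral_mono_interval le_rfl hc.1 hc.2 (hω.ae_nonneg_rpow_mul x)
          (hω.intervalIntegrable_rpow_mul h_zero h_one hx)
  have h_outer : ∫ s in (1 - δ)..1, s ^ (x + y) * ω s ≤ tl ω (1 - δ) :=
    intervalIntegral.integral_mono_on_of_le_Ioo hc.2
      (hω.intervalIntegrable_rpow_mul hc h_one (add_nonneg hx hy))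
      (hω.intervalIntegrable hc h_one) fun s hs =>
      mul_le_of_le_one_left (hω.nonneg (hc.1.trans hs.1.le) hs.2)
        (Real.rpow_le_one (hc.1.trans hs.1.le) hs.2.le (add_nonneg hx hy))
  rw [mom, ← intervalIntegral.integral_add_adjacent_intervals
    (hω.intervalIntegrable_rpow_mul h_zero hc (add_nonneg hx hy))
    (hω.intervalIntegrable_rpow_mul hc h_one (add_nonneg hx hy))]
  exact add_le_add h_inner h_outer

end IsRadialWeight

lemma exp_le_rpow {r x c : ℝ} (hr₀ : 1 / 2 ≤ r) (hr₁ : r ≤ 1) (hx : 0 ≤ x)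
    (hxc : x * (1 - r) ≤ c) : Real.exp (-(2 * c)) ≤ r ^ x := by
  have hr : 0 < r := by linarith
  have hlog : -(2 * (1 - r)) ≤ Real.log r := by
    refine le_trans ?_ (Real.one_sub_inv_le_log_of_pos hr)
    have : r⁻¹ - 1 = (1 - r) / r := by field_simp
    have : (1 - r) / r ≤ 2 * (1 - r) := by rw [div_le_iff₀ hr]; nlinarith
    linarith
  rw [Real.rpow_def_of_pos hr, Real.exp_le_exp]
  nlinarith

lemma mul_exp_neg_le_half {C a : ℝ} (h : 2 * C ≤ a) : C * Real.exp (-a) ≤ 1 / 2 := by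
  rw [Real.exp_neg, mul_inv_le_iff₀ (Real.exp_pos a)]
  linarith [Real.add_one_le_exp a]

namespace IsRadialWeight

variable {ω : ℝ → ℝ}

lemma mom_le_mul_tl_of_le (hω : IsRadialWeight ω) {D L x : ℝ} (hD₀ : 0 ≤ D)
    (hD : ∀ r, 0 ≤ r → r < 1 → tl ω r ≤ D * tl ω (1 - (1 - r) / L)) (hx : 1 ≤ x) (hxL : x ≤ L) :
    mom ω x ≤ D * tl ω (1 - 1 / x) := by
  have hx₀ : 0 < x := one_pos.trans_le hx
  calc mom ω x ≤ tl ω 0 := hω.mom_le_tl_zero hx₀.le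
    _ ≤ D * tl ω (1 - (1 - 0) / L) := hD 0 le_rfl one_pos
    _ ≤ D * tl ω (1 - 1 / x) := by
        refine mul_le_mul_of_nonneg_left (hω.tl_le_tl ?_ ?_ ?_) hD₀
        · linarith [div_le_one_of_le₀ hx hx₀.le]
        · rw [sub_zero]; gcongr
        · rw [sub_zero]; linarith [one_div_pos.2 (hx₀.trans_le hxL)]

lemma mom_le_exp_mul_mom_half_add (hω : IsRadialWeight ω) {D L x : ℝ}
    (hD : ∀ r, 0 ≤ r → r < 1 → tl ω r ≤ D * tl ω (1 - (1 - r) / L)) (hL : 0 < L) (hLx : L ≤ x) :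
    mom ω x ≤ Real.exp (-(L / 2)) * mom ω (x / 2) + D * tl ω (1 - 1 / x) := by
  have hx : 0 < x := hL.trans_le hLx
  have hδ : L / x ≤ 1 := div_le_one_of_le₀ hLx hx.le
  have hδ_pos : 0 < L / x := div_pos hL hx
  have hcut := hω.mom_add_le (half_pos hx).le (half_pos hx).le hδ_pos.le hδ
  have htail := hD (1 - L / x) (by linarith) (by linarith)
  rw [add_halves, show L / x * (x / 2) = L / 2 by field_simp] at hcut
  rw [show (1 - (1 - L / x)) / L = 1 / x by field_simp; ring] at htail
  linarith

lemma mom_le_two_mul_tl_of_half (hω : IsRadialWeight ω) {C D L x : ℝ} (hD₀ : 0 ≤ D)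
    (hC : ∀ r ∈ Ico (0 : ℝ) 1, tl ω r ≤ C * tl ω ((1 + r) / 2))
    (hD : ∀ r, 0 ≤ r → r < 1 → tl ω r ≤ D * tl ω (1 - (1 - r) / L))
    (hCL : 4 * C ≤ L) (hL : 2 ≤ L) (hLx : L ≤ x)
    (h : mom ω (x / 2) ≤ 2 * D * tl ω (1 - 1 / (x / 2))) :
    mom ω x ≤ 2 * D * tl ω (1 - 1 / x) := by
  have hx : 0 < x := by linarith
  have hx_inv : 1 / x ≤ 1 := div_le_one_of_le₀ (by linarith) hx.le
  have hx_half : 1 / (x / 2) ≤ 1 := div_le_one_of_le₀ (by linarith) (by linarith)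
  have hx_half_pos : 0 < 1 / (x / 2) := one_div_pos.2 (half_pos hx)
  have htail : 0 < tl ω (1 - 1 / x) := hω.tl_pos (by linarith) (by simpa using hx)
  have hdouble := hC (1 - 1 / (x / 2)) ⟨by linarith, by linarith⟩
  rw [show (1 + (1 - 1 / (x / 2))) / 2 = 1 - 1 / x by field_simp; ring] at hdouble
  have hexp : C * Real.exp (-(L / 2)) ≤ 1 / 2 := mul_exp_neg_le_half (by linarith)
  calc mom ω x ≤ Real.exp (-(L / 2)) * mom ω (x / 2) + D * tl ω (1 - 1 / x) :=
        hω.mom_le_exp_mul_mom_half_add hD (by linarith) hLx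
    _ ≤ Real.exp (-(L / 2)) * (2 * D * (C * tl ω (1 - 1 / x))) + D * tl ω (1 - 1 / x) := by
        gcongr
        exact h.trans (by gcongr)
    _ = C * Real.exp (-(L / 2)) * (2 * D * tl ω (1 - 1 / x)) + D * tl ω (1 - 1 / x) := by ring
    _ ≤ 1 / 2 * (2 * D * tl ω (1 - 1 / x)) + D * tl ω (1 - 1 / x) := by gcongr
    _ = 2 * D * tl ω (1 - 1 / x) := by ring

end IsRadialWeight

namespace Dhat

variable {ω : ℝ → ℝ}

lemma exists_tl_le_pow_mul_tl (hd : Dhat ω) (hω : IsRadialWeight ω) :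
    ∃ C, 1 ≤ C ∧ ∀ (j : ℕ) (r : ℝ), 0 ≤ r → r < 1 →
      tl ω r ≤ C ^ j * tl ω (1 - (1 - r) / 2 ^ j) := by
  obtain ⟨C, hC⟩ := hd
  refine ⟨max C 1, le_max_right C 1, fun j r hr₀ hr₁ => ?_⟩
  induction j with
  | zero => simp
  | succ j ih =>
    have hgap : (1 - r) / 2 ^ j ≤ 1 - r :=
      div_le_self (by linarith) (one_le_pow₀ one_le_two)
    have hgap_pos : 0 < (1 - r) / 2 ^ j := div_pos (by linarith) (by positivity)
    have hmid : (1 + (1 - (1 - r) / 2 ^ j)) / 2 = 1 - (1 - r) / 2 ^ (j + 1) := by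
      rw [pow_succ]; ring
    have hstep := hC (1 - (1 - r) / 2 ^ j) ⟨by linarith, by linarith⟩
    rw [hmid] at hstep
    have htail : 0 ≤ tl ω (1 - (1 - r) / 2 ^ (j + 1)) := by
      rw [← hmid]
      exact (hω.tl_pos (by linarith) (by linarith)).le
    calc tl ω r ≤ max C 1 ^ j * tl ω (1 - (1 - r) / 2 ^ j) := ih
      _ ≤ max C 1 ^ j * (max C 1 * tl ω (1 - (1 - r) / 2 ^ (j + 1))) := by
          gcongr
          exact hstep.trans (mul_le_mul_of_nonneg_right (le_max_left C 1) htail)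
      _ = max C 1 ^ (j + 1) * tl ω (1 - (1 - r) / 2 ^ (j + 1)) := by ring

lemma of_half_le (hω : IsRadialWeight ω) {C : ℝ}
    (hC : ∀ r, 1 / 2 ≤ r → r < 1 → tl ω r ≤ C * tl ω ((1 + r) / 2)) : Dhat ω := by
  refine ⟨max C (tl ω 0 / tl ω (3 / 4)), fun r ⟨hr₀, hr₁⟩ => ?_⟩
  have htail : 0 < tl ω ((1 + r) / 2) := hω.tl_pos (by linarith) (by linarith)
  rcases le_total (1 / 2) r with hr | hr
  · exact (hC r hr hr₁).trans (mul_le_mul_of_nonneg_right (le_max_left _ _) htail.le)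
  · have htail' : 0 < tl ω (3 / 4) := hω.tl_pos (by norm_num) (by norm_num)
    calc tl ω r ≤ tl ω 0 := hω.tl_le_tl le_rfl hr₀ hr₁.le
      _ = tl ω 0 / tl ω (3 / 4) * tl ω (3 / 4) := (div_mul_cancel₀ _ htail'.ne').symm
      _ ≤ max C (tl ω 0 / tl ω (3 / 4)) * tl ω ((1 + r) / 2) :=
          mul_le_mul (le_max_right _ _) (hω.tl_le_tl (by linarith) (by linarith) (by norm_num))
            htail'.le (le_max_of_le_right
              (div_nonneg (hω.tl_pos le_rfl one_pos).le htail'.le))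

lemma exists_mom_le_mul_tl (hd : Dhat ω) (hω : IsRadialWeight ω) :
    ∃ K, 0 < K ∧ ∀ x, 1 ≤ x → mom ω x ≤ K * tl ω (1 - 1 / x) := by
  obtain ⟨C, hC⟩ := id hd
  obtain ⟨B, hB₁, hB⟩ := hd.exists_tl_le_pow_mul_tl hω
  obtain ⟨j, hj⟩ := pow_unbounded_of_one_lt (max 2 (4 * C)) (one_lt_two (α := ℝ))
  have hD : 0 < B ^ j := by positivity
  have h_small : ∀ x, 1 ≤ x → x ≤ 2 ^ j →
      mom ω x ≤ 2 * B ^ j * tl ω (1 - 1 / x) := fun x hx hxj => by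
    have hmom := hω.mom_le_mul_tl_of_le hD.le (hB j) hx hxj
    linarith [hω.mom_pos (zero_le_one.trans hx)]
  suffices H : ∀ (n : ℕ) (x : ℝ), 1 ≤ x → x ≤ 2 ^ n → mom ω x ≤ 2 * B ^ j * tl ω (1 - 1 / x) by
    refine ⟨2 * B ^ j, by positivity, fun x hx => ?_⟩
    obtain ⟨n, hn⟩ := pow_unbounded_of_one_lt x (one_lt_two (α := ℝ))
    exact H n x hx hn.le
  intro n
  induction n with
  | zero => exact fun x hx hxn => h_small x hx (hxn.trans (pow_le_pow_right₀ one_le_two j.zero_le))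
  | succ n ih =>
    intro x hx hxn
    rcases le_total x (2 ^ j) with hxj | hxj
    · exact h_small x hx hxj
    · have hj₂ : 2 < (2 : ℝ) ^ j := (le_max_left _ _).trans_lt hj
      refine hω.mom_le_two_mul_tl_of_half hD.le hC (hB j) ((le_max_right _ _).trans hj.le)
        hj₂.le hxj (ih (x / 2) (by linarith) ?_)
      rw [pow_succ] at hxn
      linarith

lemma exists_mom_le_mul_tl_of_le (hd : Dhat ω) (hω : IsRadialWeight ω) (j : ℕ) :
    ∃ K, 0 < K ∧ ∀ r x, 0 ≤ r → 1 ≤ x → 1 ≤ 2 ^ j * ((1 - r) * x) →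
      mom ω x ≤ K * tl ω r := by
  obtain ⟨K, hK₀, hK⟩ := hd.exists_mom_le_mul_tl hω
  obtain ⟨C, hC₁, hC⟩ := hd.exists_tl_le_pow_mul_tl hω
  refine ⟨K * C ^ j, by positivity, fun r x hr₀ hx hrx => ?_⟩
  have hx₀ : 0 < x := one_pos.trans_le hx
  have hx_inv : 1 / x ≤ 1 := div_le_one_of_le₀ hx hx₀.le
  have hx_inv_pos : 0 < 1 / x := one_div_pos.2 hx₀
  have hrx' : 1 / x / 2 ^ j ≤ 1 - r := by
    rw [div_div, div_le_iff₀ (by positivity)]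
    linarith
  have hgap : 0 < 1 / x / 2 ^ j := by positivity
  calc mom ω x ≤ K * tl ω (1 - 1 / x) := hK x hx
    _ ≤ K * (C ^ j * tl ω (1 - (1 - (1 - 1 / x)) / 2 ^ j)) := by
        gcongr
        exact hC j _ (by linarith) (by linarith)
    _ ≤ K * (C ^ j * tl ω r) := by
        rw [sub_sub_cancel]
        gcongr
        exact hω.tl_le_tl hr₀ (by linarith) (by linarith)
    _ = K * C ^ j * tl ω r := by ring

lemma of_mom_le (hω : IsRadialWeight ω) {C ε x₀ : ℝ} (hε : 0 < ε)
    (hmom : ∀ x, x₀ ≤ x → mom ω x ≤ C * mom ω (x + ε * x)) : Dhat ω := by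
  obtain ⟨b, hb₀, hbx, hbC⟩ : ∃ b, 0 ≤ b ∧ x₀ ≤ b ∧ 4 * C ≤ ε * b :=
    ⟨max (max 0 x₀) (4 * C / ε), le_max_of_le_left (le_max_left _ _),
      le_max_of_le_left (le_max_right _ _), by
        rw [← div_le_iff₀' hε]; exact le_max_right _ _⟩
  refine of_half_le hω (C := Real.exp (2 * (b + ε * b)) * 2) fun r hr hr₁ => ?_
  have hgap : 0 < 1 - r := by linarith
  obtain ⟨x, hx⟩ : ∃ x, x * (1 - r) = b := ⟨b / (1 - r), div_mul_cancel₀ b hgap.ne'⟩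
  have hbx' : b ≤ x := by nlinarith
  have hx₀ : 0 ≤ x := hb₀.trans hbx'
  have hexp : C * Real.exp (-((1 - r) / 2 * (ε * x))) ≤ 1 / 2 :=
    mul_exp_neg_le_half (by rw [← hx] at hbC; linarith)
  have hmom_pos : 0 < mom ω (x + ε * x) := hω.mom_pos (by positivity)
  have h_upper : mom ω (x + ε * x) ≤ 2 * tl ω ((1 + r) / 2) := by
    have hcut := hω.mom_add_le hx₀ (mul_nonneg hε.le hx₀) (half_pos hgap).le (by linarith)
    rw [show 1 - (1 - r) / 2 = (1 + r) / 2 by ring] at hcut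
    have := mul_le_mul_of_nonneg_left (hmom x (hbx.trans hbx'))
      (Real.exp_pos (-((1 - r) / 2 * (ε * x)))).le
    have := mul_le_mul_of_nonneg_right hexp hmom_pos.le
    linarith
  have h_lower : Real.exp (-(2 * (b + ε * b))) * tl ω r ≤ mom ω (x + ε * x) := by
    refine le_trans ?_ (hω.rpow_mul_tl_le_mom (by linarith) hr₁.le (by positivity))
    refine mul_le_mul_of_nonneg_right (exp_le_rpow hr hr₁.le (by positivity) ?_)
      (hω.tl_pos (by linarith) hr₁).le
    rw [← hx]
    linarith
  rw [Real.exp_neg, inv_mul_le_iff₀ (Real.exp_pos _)] at h_lower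
  rw [mul_assoc]
  exact h_lower.trans (by gcongr)

end Dhat

/-- Logarithmic decay of the tail: `ω̂(t) ≲ ω̂(r) / log ((1 - r) / (1 - t))` for `1/2 ≤ r ≤ t < 1`,
stated without division. -/
def LogDecay (ω : ℝ → ℝ) : Prop :=
  ∃ C : ℝ, 0 < C ∧ ∀ r t : ℝ, 1 / 2 ≤ r → r ≤ t → t < 1 →
    Real.log ((1 - r) / (1 - t)) * tl ω t ≤ C * tl ω r

/-- The ratio `ω̂/ν̂` of tails is almost decreasing on `[1/2, 1)`, stated without division. -/
def AlmostDecreasingTailRatio (ω ν : ℝ → ℝ) : Prop :=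
  ∃ C : ℝ, 0 < C ∧ ∀ r t : ℝ, 1 / 2 ≤ r → r ≤ t → t < 1 →
    tl ω t * tl ν r ≤ C * (tl ω r * tl ν t)

lemma LogDecay.dcheck {ω : ℝ → ℝ} (hlog : LogDecay ω) (hω : IsRadialWeight ω) : Dcheck ω := by
  obtain ⟨C, hC₀, hC⟩ := hlog
  have hexp : 1 < Real.exp (2 * C) := Real.one_lt_exp_iff.2 (by linarith)
  refine ⟨2 * Real.exp (2 * C), 2, by linarith, one_lt_two, fun r ⟨hr₀, hr₁⟩ => ?_⟩
  set t := 1 - (1 - r) / (2 * Real.exp (2 * C)) with ht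
  have hgap_t : 1 - t = (1 - r) / (2 * Real.exp (2 * C)) := by rw [ht]; ring
  have ht₁ : t < 1 := by
    have : 0 < (1 - r) / (2 * Real.exp (2 * C)) := by positivity
    linarith
  have hrt : (1 + r) / 2 ≤ t := by
    have : (1 - r) / (2 * Real.exp (2 * C)) ≤ (1 - r) / 2 := by gcongr; linarith
    linarith
  have hratio : (1 - (1 + r) / 2) / (1 - t) = Real.exp (2 * C) := by
    rw [hgap_t]
    field_simp
    ring
  have hdecay := hC ((1 + r) / 2) t (by linarith) hrt ht₁
  rw [hratio, Real.log_exp] at hdecay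
  have htail : tl ω ((1 + r) / 2) ≤ tl ω r := hω.tl_le_tl hr₀ (by linarith) (by linarith)
  exact le_trans (by nlinarith) htail

lemma LogDecay.of_almostDecreasingTailRatio {ω ν : ℝ → ℝ} (hlog : LogDecay ν)
    (hν : IsRadialWeight ν) (hratio : AlmostDecreasingTailRatio ω ν) (hω : IsRadialWeight ω) :
    LogDecay ω := by
  obtain ⟨A, hA₀, hA⟩ := hlog
  obtain ⟨C, hC₀, hC⟩ := hratio
  refine ⟨C * A, by positivity, fun r t hr hrt ht => ?_⟩
  have hlog_nonneg : 0 ≤ Real.log ((1 - r) / (1 - t)) :=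
    Real.log_nonneg ((one_le_div (by linarith)).2 (by linarith))
  have hωr : 0 < tl ω r := hω.tl_pos (by linarith) (by linarith)
  have hνr : 0 < tl ν r := hν.tl_pos (by linarith) (by linarith)
  refine le_of_mul_le_mul_right ?_ hνr
  calc Real.log ((1 - r) / (1 - t)) * tl ω t * tl ν r
      = Real.log ((1 - r) / (1 - t)) * (tl ω t * tl ν r) := by ring
    _ ≤ Real.log ((1 - r) / (1 - t)) * (C * (tl ω r * tl ν t)) :=
        mul_le_mul_of_nonneg_left (hC r t hr hrt ht) hlog_nonneg
    _ = C * tl ω r * (Real.log ((1 - r) / (1 - t)) * tl ν t) := by ring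
    _ ≤ C * tl ω r * (A * tl ν r) :=
        mul_le_mul_of_nonneg_left (hA r t hr hrt ht) (by positivity)
    _ = C * A * tl ω r * tl ν r := by ring

/-! ### Projections of functions with separated variables -/

lemma mem_unitDisc {z : ℂ} : z ∈ unitDisc ↔ ‖z‖ < 1 := mem_ball_zero_iff

lemma measurableSet_unitDisc : MeasurableSet unitDisc := measurableSet_ball

lemma IsRadialWeight.summable_pow_div_mom {ω : ℝ → ℝ} (hω : IsRadialWeight ω) {t : ℝ}
    (ht₀ : 0 ≤ t) (ht₁ : t < 1) : Summable fun n : ℕ => t ^ n / (2 * mom ω (2 * n + 1)) := by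
  obtain ⟨ρ, hρ₀, hρ₁, htρ⟩ : ∃ ρ : ℝ, 0 < ρ ∧ ρ < 1 ∧ t < ρ ^ 2 :=
    ⟨(1 + t) / 2, by linarith, by linarith, by nlinarith⟩
  have htail : 0 < tl ω ρ := hω.tl_pos hρ₀.le hρ₁
  have hratio : t / ρ ^ 2 < 1 := (div_lt_one (by positivity)).2 htρ
  have hmom_pos : ∀ n : ℕ, 0 < mom ω (2 * n + 1) := fun n => hω.mom_pos (by positivity)
  refine Summable.of_nonneg_of_le
    (fun n => div_nonneg (pow_nonneg ht₀ n) (mul_pos two_pos (hmom_pos n)).le)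
    (fun n => ?_) ((summable_geometric_of_lt_one (by positivity) hratio).mul_left
      (1 / (2 * (ρ * tl ω ρ))))
  have hmom := hω.rpow_mul_tl_le_mom hρ₀.le hρ₁.le (x := 2 * n + 1) (by positivity)
  calc t ^ n / (2 * mom ω (2 * n + 1)) ≤ t ^ n / (2 * (ρ ^ (2 * n + 1 : ℝ) * tl ω ρ)) := by gcongr
    _ = t ^ n / (2 * (ρ ^ (2 * n + 1) * tl ω ρ)) := by norm_cast
    _ = 1 / (2 * (ρ * tl ω ρ)) * (t / ρ ^ 2) ^ n := by
        rw [div_pow, ← pow_mul, pow_succ]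
        field_simp

lemma norm_mul_conj_pow_le (w : ℂ) {ζ : ℂ} (hζ : ζ ∈ unitDisc) (n : ℕ) :
    ‖w * starRingEnd ℂ ζ ^ n‖ ≤ ‖w‖ := by
  rw [norm_mul, norm_pow, RCLike.norm_conj]
  exact mul_le_of_le_one_right (norm_nonneg _)
    (pow_le_one₀ (norm_nonneg _) (mem_unitDisc.1 hζ).le)

lemma integrableOn_mul_conj_pow {g : ℂ → ℂ} (hg : IntegrableOn g unitDisc) (n : ℕ) :
    IntegrableOn (fun ζ => g ζ * starRingEnd ℂ ζ ^ n) unitDisc := by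
  refine Integrable.mono hg
    (hg.aestronglyMeasurable.mul (continuous_conj.pow n).aestronglyMeasurable) ?_
  filter_upwards [ae_restrict_mem measurableSet_unitDisc] with ζ hζ
  exact norm_mul_conj_pow_le _ hζ n

lemma bInt_eq_tsum (ω : ℝ → ℝ) (f : ℂ → ℂ) (z ζ : ℂ) :
    bInt ω f z ζ = ∑' n : ℕ, z ^ n / ((2 * mom ω (2 * n + 1) : ℝ) : ℂ) *
      (f ζ * (ω ‖ζ‖ : ℂ) * starRingEnd ℂ ζ ^ n) := by
  rw [bInt, bKer, conj_tsum, ← tsum_mul_left, ← tsum_mul_right]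
  refine tsum_congr fun n => ?_
  rw [map_div₀, map_pow, map_mul, conj_conj, conj_ofReal, mul_pow]
  ring

lemma IsRadialWeight.hasSum_bProj {ω : ℝ → ℝ} (hω : IsRadialWeight ω) {f : ℂ → ℂ}
    (hf : IntegrableOn (fun ζ => f ζ * (ω ‖ζ‖ : ℂ)) unitDisc) {z : ℂ} (hz : z ∈ unitDisc) :
    HasSum (fun n : ℕ => z ^ n / ((2 * mom ω (2 * n + 1) : ℝ) : ℂ) *
      ((Real.pi : ℂ)⁻¹ * ∫ ζ in unitDisc, f ζ * (ω ‖ζ‖ : ℂ) * starRingEnd ℂ ζ ^ n))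
      (bProj ω f z) := by
  set c : ℕ → ℂ := fun n => z ^ n / ((2 * mom ω (2 * n + 1) : ℝ) : ℂ)
  set F : ℕ → ℂ → ℂ := fun n ζ => c n * (f ζ * (ω ‖ζ‖ : ℂ) * starRingEnd ℂ ζ ^ n)
  have hc : ∀ n, ‖c n‖ = ‖z‖ ^ n / (2 * mom ω (2 * n + 1)) := fun n => by
    rw [norm_div, norm_pow, norm_real, Real.norm_of_nonneg
      (mul_pos two_pos (hω.mom_pos (x := 2 * n + 1) (by positivity))).le]
  have hF : ∀ n, IntegrableOn (F n) unitDisc := fun n =>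
    (integrableOn_mul_conj_pow hf n).const_mul (c n)
  have hF_le : ∀ n, ∫ ζ in unitDisc, ‖F n ζ‖ ≤ ‖c n‖ * ∫ ζ in unitDisc, ‖f ζ * (ω ‖ζ‖ : ℂ)‖ := by
    intro n
    rw [← integral_const_mul]
    refine setIntegral_mono_on (hF n).norm (hf.norm.const_mul _) measurableSet_unitDisc
      fun ζ hζ => ?_
    rw [norm_mul]
    exact mul_le_mul_of_nonneg_left (norm_mul_conj_pow_le _ hζ n) (norm_nonneg _)
  have hF_summable : Summable fun n => ∫ ζ in unitDisc, ‖F n ζ‖ := by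
    refine Summable.of_nonneg_of_le (fun n => integral_nonneg fun _ => norm_nonneg _) hF_le
      (Summable.mul_right _ ?_)
    simpa only [hc] using hω.summable_pow_div_mom (norm_nonneg z) (mem_unitDisc.1 hz)
  have hsum := (hasSum_integral_of_summable_integral_norm hF hF_summable).mul_left (Real.pi : ℂ)⁻¹
  simp only [F, integral_const_mul, mul_left_comm (Real.pi : ℂ)⁻¹] at hsum
  simpa only [bProj, bInt_eq_tsum] using hsum

/-- The `n`-th Fourier coefficient of a function of the angle `θ ∈ (-π, π]`. -/
def angularCoeff (h : ℝ → ℂ) (n : ℤ) : ℂ := fourierCoeffOn (neg_lt_self Real.pi_pos) h n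

lemma fourier_coe_pi_sub_neg_pi (n : ℤ) (θ : ℝ) :
    fourier n (θ : AddCircle (Real.pi - -Real.pi)) = exp (n * θ * I) := by
  rw [fourier_coe_apply]
  congr 1
  push_cast
  field_simp [Real.pi_ne_zero]
  ring

lemma integral_mul_exp_eq_angularCoeff (h : ℝ → ℂ) (n : ℤ) :
    ∫ θ in Ioo (-Real.pi) Real.pi, h θ * exp (-(n * θ * I)) = 2 * Real.pi * angularCoeff h n := by
  have h_integrand : ∀ θ : ℝ, fourier (-n) (θ : AddCircle (Real.pi - -Real.pi)) • h θ =
      h θ * exp (-(n * θ * I)) := fun θ => by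
    rw [fourier_coe_pi_sub_neg_pi, smul_eq_mul, mul_comm, Int.cast_neg, neg_mul, neg_mul]
  have h_length : 2 * (Real.pi : ℂ) * ((1 / (Real.pi - -Real.pi) : ℝ) : ℂ) = 1 := by
    rw [sub_neg_eq_add, ← two_mul]
    push_cast
    exact mul_one_div_cancel (mul_ne_zero two_ne_zero (ofReal_ne_zero.2 Real.pi_ne_zero))
  rw [← integral_Ioc_eq_integral_Ioo,
    ← intervalIntegral.integral_of_le (neg_lt_self Real.pi_pos).le, angularCoeff,
    fourierCoeffOn_eq_integral, real_smul, ← mul_assoc, h_length, one_mul]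
  simp only [h_integrand]

lemma angularCoeff_exp (m n : ℤ) :
    angularCoeff (fun θ => exp (m * θ * I)) n = if n = m then 1 else 0 := by
  have : Fact (0 < Real.pi - -Real.pi) := ⟨by linarith [Real.pi_pos]⟩
  have hcoeff := congrFun (fourierCoeff_fourier (T := Real.pi - -Real.pi) m) n
  rw [fourierCoeff_eq_intervalIntegral _ _ (-Real.pi), add_sub_cancel, Pi.single_apply] at hcoeff
  rw [angularCoeff, fourierCoeffOn_eq_integral, ← hcoeff]
  simp only [fourier_coe_pi_sub_neg_pi]

-- At `n = 0` the right-hand side is `x / 0 = 0`, which is the correct coefficient.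
lemma angularCoeff_ofReal (n : ℤ) : angularCoeff (fun θ => (θ : ℂ)) n = I * (-1) ^ n / n := by
  rcases eq_or_ne n 0 with rfl | hn
  · have h_odd : ∫ θ in -Real.pi..Real.pi, (θ : ℂ) = 0 := by
      rw [intervalIntegral.integral_ofReal, integral_id]
      simp
    simp [angularCoeff, fourierCoeffOn_eq_integral, h_odd]
  have h_deriv_coeff : fourierCoeffOn (neg_lt_self Real.pi_pos) (fun _ => (1 : ℂ)) n = 0 := by
    simpa [angularCoeff, hn] using angularCoeff_exp 0 n
  have h_endpoint : exp (-n * -Real.pi * I) = (-1) ^ n := by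
    rw [neg_mul_neg, mul_assoc, exp_int_mul, exp_pi_mul_I]
  rw [angularCoeff, fourierCoeffOn_of_hasDerivAt _ hn (f' := fun _ => 1)
    (fun θ _ => by simpa using (hasDerivAt_id θ).ofReal_comp) intervalIntegrable_const,
    h_deriv_coeff, fourier_coe_pi_sub_neg_pi]
  push_cast
  rw [h_endpoint]
  have hn' : (n : ℂ) ≠ 0 := Int.cast_ne_zero.2 hn
  field_simp [Real.pi_ne_zero]
  ring_nf
  simp

/-- The function `h(arg ζ) g(|ζ|)` with angular part `h` and radial part `g`. -/
def polarFun (h : ℝ → ℂ) (g : ℝ → ℝ) (ζ : ℂ) : ℂ := h (arg ζ) * (g ‖ζ‖ : ℂ)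

lemma norm_polarCoord_symm_of_pos {p : ℝ × ℝ} (hp : 0 < p.1) :
    ‖Complex.polarCoord.symm p‖ = p.1 := by
  rw [norm_polarCoord_symm, abs_of_pos hp]

lemma arg_polarCoord_symm {p : ℝ × ℝ} (hp₁ : 0 < p.1) (hp₂ : p.2 ∈ Ioo (-Real.pi) Real.pi) :
    arg (Complex.polarCoord.symm p) = p.2 := by
  have harg := arg_mul_cos_add_sin_mul_I hp₁ ⟨hp₂.1, hp₂.2.le⟩
  rw [Complex.polarCoord_symm_apply]
  push_cast at harg ⊢
  exact harg

lemma conj_polarCoord_symm (p : ℝ × ℝ) :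
    starRingEnd ℂ (Complex.polarCoord.symm p) = p.1 * exp (-(p.2 * I)) := by
  have hexp : exp (-(p.2 * I)) = starRingEnd ℂ (exp (p.2 * I)) := by
    rw [← exp_conj, map_mul, conj_ofReal, conj_I, mul_neg]
  rw [Complex.polarCoord_symm_apply, hexp, exp_mul_I, map_mul, conj_ofReal]
  push_cast
  rfl

lemma polarFun_mul_conj_pow_polarCoord_symm (h : ℝ → ℂ) (g : ℝ → ℝ) (n : ℕ) {p : ℝ × ℝ}
    (hp : p ∈ Ioi (0 : ℝ) ×ˢ Ioo (-Real.pi) Real.pi) :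
    p.1 • unitDisc.indicator (fun ζ => polarFun h g ζ * starRingEnd ℂ ζ ^ n)
      (Complex.polarCoord.symm p) =
    (Ioo (0 : ℝ) 1).indicator (fun s => ((s ^ (n + 1 : ℝ) * g s : ℝ) : ℂ)) p.1 *
      (h p.2 * exp (-(n * p.2 * I))) := by
  have hp₁ : 0 < p.1 := hp.1
  have hnorm := norm_polarCoord_symm_of_pos hp₁
  by_cases hlt : p.1 < 1
  · have hmem : Complex.polarCoord.symm p ∈ unitDisc := mem_unitDisc.2 (by rwa [hnorm])
    rw [indicator_of_mem hmem, indicator_of_mem (show p.1 ∈ Ioo (0 : ℝ) 1 from ⟨hp₁, hlt⟩),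
      polarFun, hnorm, arg_polarCoord_symm hp₁ hp.2, conj_polarCoord_symm, mul_pow,
      ← exp_nat_mul, real_smul, mul_neg, ← mul_assoc (n : ℂ), ← Nat.cast_add_one, Real.rpow_natCast]
    push_cast
    ring
  · have hmem : Complex.polarCoord.symm p ∉ unitDisc := fun hmem =>
      hlt (by simpa only [hnorm] using mem_unitDisc.1 hmem)
    rw [indicator_of_notMem hmem, indicator_of_notMem (fun hp => hlt hp.2), smul_zero, zero_mul]

lemma integral_polarFun_mul_conj_pow (h : ℝ → ℂ) (g : ℝ → ℝ) (n : ℕ) :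
    ∫ ζ in unitDisc, polarFun h g ζ * starRingEnd ℂ ζ ^ n =
      2 * Real.pi * mom g (n + 1) * angularCoeff h n := by
  have h_radial : ∫ s in Ioi (0 : ℝ),
      (Ioo (0 : ℝ) 1).indicator (fun s => ((s ^ (n + 1 : ℝ) * g s : ℝ) : ℂ)) s =
        mom g (n + 1) := by
    rw [setIntegral_indicator measurableSet_Ioo, inter_eq_self_of_subset_right Ioo_subset_Ioi_self,
      mom, intervalIntegral.integral_of_le zero_le_one, integral_Ioc_eq_integral_Ioo]
    exact integral_ofReal
  have h_angular := integral_mul_exp_eq_angularCoeff h n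
  rw [Int.cast_natCast] at h_angular
  rw [← integral_indicator measurableSet_unitDisc, ← Complex.integral_comp_polarCoord_symm,
    polarCoord_target, setIntegral_congr_fun (measurableSet_Ioi.prod measurableSet_Ioo)
      (fun p hp => polarFun_mul_conj_pow_polarCoord_symm h g n hp), Measure.volume_eq_prod,
    setIntegral_prod_mul ((Ioo (0 : ℝ) 1).indicator fun s => ((s ^ (n + 1 : ℝ) * g s : ℝ) : ℂ))
      (fun θ : ℝ => h θ * exp (-(n * θ * I))), h_radial, h_angular]
  ring

/-- The quotient weight `ω/ν̂`. -/
def quotTl (ω ν : ℝ → ℝ) : ℝ → ℝ := fun s => ω s / tl ν s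

lemma polarFun_inv_tl_mul (h : ℝ → ℂ) (ω ν : ℝ → ℝ) (ζ : ℂ) :
    polarFun h (fun s => (tl ν s)⁻¹) ζ * (ω ‖ζ‖ : ℂ) = polarFun h (quotTl ω ν) ζ := by
  rw [polarFun, polarFun, quotTl, div_eq_inv_mul]
  push_cast
  ring

namespace IsRadialWeight

variable {ω ν : ℝ → ℝ}

lemma tl_norm_pos (hν : IsRadialWeight ν) {ζ : ℂ} (hζ : ζ ∈ unitDisc) : 0 < tl ν ‖ζ‖ :=
  hν.tl_pos (norm_nonneg ζ) (mem_unitDisc.1 hζ)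

lemma continuousOn_tl_norm (hν : IsRadialWeight ν) :
    ContinuousOn (fun ζ : ℂ => tl ν ‖ζ‖) unitDisc :=
  hν.continuousOn_tl.comp continuous_norm.continuousOn fun ζ hζ =>
    ⟨norm_nonneg ζ, (mem_unitDisc.1 hζ).le⟩

lemma tl_le_tl_mul_tl_quotTl (hω : IsRadialWeight ω) (hν : IsRadialWeight ν) {r : ℝ} (hr₀ : 0 ≤ r)
    (hr₁ : r < 1) (hq : IntervalIntegrable (quotTl ω ν) volume r 1) :
    tl ω r ≤ tl ν r * tl (quotTl ω ν) r := calc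
  tl ω r ≤ ∫ s in r..1, tl ν r * quotTl ω ν s := by
      refine intervalIntegral.integral_mono_on_of_le_Ioo hr₁.le
        (hω.intervalIntegrable ⟨hr₀, hr₁.le⟩ (by simp)) (hq.const_mul _) fun s hs => ?_
      have hs₀ : 0 ≤ s := hr₀.trans hs.1.le
      rw [quotTl, mul_div_left_comm]
      exact le_mul_of_one_le_right (hω.nonneg hs₀ hs.2)
        ((one_le_div (hν.tl_pos hs₀ hs.2)).2 (hν.tl_le_tl hr₀ hs.1.le hs.2.le))
  _ = tl ν r * tl (quotTl ω ν) r := intervalIntegral.integral_const_mul _ _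

lemma intervalIntegrable_quotTl (hω : IsRadialWeight ω) (hν : IsRadialWeight ν)
    (hq : IntervalIntegrable (fun s => s * quotTl ω ν s) volume 0 1) :
    IntervalIntegrable (quotTl ω ν) volume 0 1 := by
  have h_inner : IntervalIntegrable (quotTl ω ν) volume 0 (1 / 2) := by
    have hcont : ContinuousOn (fun s => (tl ν s)⁻¹) (uIcc 0 (1 / 2)) := by
      rw [uIcc_of_le one_half_pos.le]
      exact (hν.continuousOn_tl.mono (Icc_subset_Icc_right one_half_lt_one.le)).inv₀
        fun s hs => (hν.tl_pos hs.1 (hs.2.trans_lt one_half_lt_one)).ne'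
    have hω_half := hω.intervalIntegrable (a := 0) (b := 1 / 2) (by simp) (by norm_num)
    exact (hω_half.continuousOn_mul hcont).congr fun s _ => (div_eq_inv_mul _ _).symm
  have h_outer : IntervalIntegrable (quotTl ω ν) volume (1 / 2) 1 := by
    have hpos : ∀ s ∈ uIcc (1 / 2 : ℝ) 1, s ≠ 0 := fun s hs => by
      rw [uIcc_of_le one_half_lt_one.le] at hs
      exact (one_half_pos.trans_le hs.1).ne'
    have hq_half := hq.mono_set (c := 1 / 2) (d := 1)
      (uIcc_subset_uIcc_right (by norm_num [uIcc_of_le]))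
    exact (hq_half.continuousOn_mul (continuousOn_inv₀.mono hpos)).congr fun s hs =>
      inv_mul_cancel_left₀ (hpos s (uIoc_subset_uIcc hs)) _
  exact h_inner.trans h_outer

lemma quotTl_of_intervalIntegrable (hω : IsRadialWeight ω) (hν : IsRadialWeight ν)
    (hq : IntervalIntegrable (quotTl ω ν) volume 0 1) : IsRadialWeight (quotTl ω ν) := by
  refine ⟨fun s hs => div_nonneg (hω.nonneg hs.1 hs.2) (hν.tl_pos hs.1 hs.2).le,
    (intervalIntegrable_iff_integrableOn_Ico_of_le zero_le_one).1 hq, fun r hr => ?_⟩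
  have hq_tail : IntervalIntegrable (quotTl ω ν) volume r 1 :=
    hq.mono_set (uIcc_subset_uIcc_right (by simpa [uIcc_of_le] using ⟨hr.1, hr.2.le⟩))
  exact pos_of_mul_pos_right ((hω.tl_pos hr.1 hr.2).trans_le
    (hω.tl_le_tl_mul_tl_quotTl hν hr.1 hr.2 hq_tail)) (hν.tl_pos hr.1 hr.2).le

lemma aestronglyMeasurable_polarFun_inv_tl (hν : IsRadialWeight ν) {h : ℝ → ℂ}
    (hh : Measurable h) :
    AEStronglyMeasurable (polarFun h fun s => (tl ν s)⁻¹) (volume.restrict unitDisc) := by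
  refine (hh.comp measurable_arg).aestronglyMeasurable.mul
    (continuous_ofReal.comp_aestronglyMeasurable
      (ContinuousOn.aestronglyMeasurable ?_ measurableSet_unitDisc))
  exact hν.continuousOn_tl_norm.inv₀ fun ζ hζ => (hν.tl_norm_pos hζ).ne'

lemma wSup_polarFun_inv_tl_le (hν : IsRadialWeight ν) {h : ℝ → ℂ} {H : ℝ}
    (hH : ∀ θ ∈ Ioc (-Real.pi) Real.pi, ‖h θ‖ ≤ H) :
    wSup (tl ν) (polarFun h fun s => (tl ν s)⁻¹) ≤ ENNReal.ofReal H := by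
  refine essSup_le_of_ae_le _ ?_
  filter_upwards [ae_restrict_mem measurableSet_unitDisc] with ζ hζ
  have htail := hν.tl_norm_pos hζ
  rw [polarFun, norm_mul, norm_real, Real.norm_of_nonneg (inv_pos.2 htail).le,
    inv_mul_cancel_right₀ htail.ne']
  exact ENNReal.ofReal_le_ofReal (hH _ (arg_mem_Ioc ζ))

end IsRadialWeight

lemma le_of_wSup_le {v : ℝ → ℝ} {f : ℂ → ℂ} {C : ℝ} (hC : 0 ≤ C)
    (hcont : ContinuousOn (fun z => ‖f z‖ * v ‖z‖) unitDisc) (hf : wSup v f ≤ ENNReal.ofReal C)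
    {z : ℂ} (hz : z ∈ unitDisc) : ‖f z‖ * v ‖z‖ ≤ C := by
  have hae : ∀ᵐ w ∂volume.restrict unitDisc, ‖f w‖ * v ‖w‖ ≤ C := by
    filter_upwards [ENNReal.ae_le_essSup (μ := volume.restrict unitDisc)
      fun w => ENNReal.ofReal (‖f w‖ * v ‖w‖)] with w hw
    exact (ENNReal.ofReal_le_ofReal_iff hC).1 (hw.trans hf)
  have hmax : EqOn (fun w => max (‖f w‖ * v ‖w‖) C) (fun _ => C) unitDisc :=
    Measure.eqOn_open_of_ae_eq (μ := volume)
      (by filter_upwards [hae] with w hw using max_eq_right hw) Metric.isOpen_ball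
      (hcont.sup continuousOn_const) continuousOn_const
  exact max_eq_right_iff.1 (hmax hz)

lemma bKer_zero_left (ω : ℝ → ℝ) (ζ : ℂ) : bKer ω 0 ζ = ((2 * mom ω 1 : ℝ) : ℂ)⁻¹ := by
  rw [bKer, tsum_eq_single 0 fun n hn => by simp [hn]]
  simp

namespace ProjBddH

variable {ω ν : ℝ → ℝ}

-- Absolute convergence of `P_ω (1/ν̂)` at the origin.
lemma intervalIntegrable_mul_quotTl (hb : ProjBddH ω (tl ν)) (hω : IsRadialWeight ω)
    (hν : IsRadialWeight ν) : IntervalIntegrable (fun s => s * quotTl ω ν s) volume 0 1 := by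
  obtain ⟨C, -, hC⟩ := hb
  have hconv := (hC (polarFun (fun _ => 1) fun s => (tl ν s)⁻¹)
    (hν.aestronglyMeasurable_polarFun_inv_tl measurable_const)
    ((hν.wSup_polarFun_inv_tl_le (H := 1) (by simp)).trans_lt ENNReal.ofReal_lt_top)).1 0
    (mem_unitDisc.2 (by simp))
  have h_radial : bInt ω (polarFun (fun _ => 1) fun s => (tl ν s)⁻¹) 0 =
      fun ζ : ℂ => ((2 * mom ω 1 : ℝ) : ℂ)⁻¹ * (quotTl ω ν ‖ζ‖ : ℂ) := by
    funext ζ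
    rw [bInt, bKer_zero_left, map_inv₀, conj_ofReal, mul_right_comm, polarFun_inv_tl_mul,
      polarFun, one_mul, mul_comm]
  have hmom : ((2 * mom ω 1 : ℝ) : ℂ)⁻¹ ≠ 0 :=
    inv_ne_zero (ofReal_ne_zero.2 (mul_pos two_pos (hω.mom_pos zero_le_one)).ne')
  rw [h_radial, IntegrableOn, integrable_const_mul_iff hmom.isUnit] at hconv
  have h_polar := (integrableOn_fun_norm_addHaar (E := ℂ) volume (r := 1)
    (f := fun s => (quotTl ω ν s : ℂ))).1 hconv
  rw [finrank_real_complex] at h_polar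
  rw [intervalIntegrable_iff_integrableOn_Ioo_of_le zero_le_one]
  simpa [IntegrableOn] using h_polar.re

lemma isRadialWeight_quotTl (hb : ProjBddH ω (tl ν)) (hω : IsRadialWeight ω)
    (hν : IsRadialWeight ν) : IsRadialWeight (quotTl ω ν) :=
  hω.quotTl_of_intervalIntegrable hν
    (hω.intervalIntegrable_quotTl hν (hb.intervalIntegrable_mul_quotTl hω hν))

lemma exists_norm_bProj_polarFun_le (hb : ProjBddH ω (tl ν)) (hν : IsRadialWeight ν) :
    ∃ C, 0 < C ∧ ∀ (h : ℝ → ℂ) (H : ℝ), Measurable h → 0 ≤ H →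
      (∀ θ ∈ Ioc (-Real.pi) Real.pi, ‖h θ‖ ≤ H) → ∀ z ∈ unitDisc,
        ‖bProj ω (polarFun h fun s => (tl ν s)⁻¹) z‖ * tl ν ‖z‖ ≤ C * H := by
  obtain ⟨C, hC₀, hC⟩ := hb
  refine ⟨C, hC₀, fun h H hh hH₀ hH z hz => ?_⟩
  have hsup := hν.wSup_polarFun_inv_tl_le hH
  obtain ⟨-, hdiff, hle⟩ := hC _ (hν.aestronglyMeasurable_polarFun_inv_tl hh)
    (hsup.trans_lt ENNReal.ofReal_lt_top)
  refine le_of_wSup_le (by positivity) (hdiff.continuousOn.norm.mul hν.continuousOn_tl_norm) ?_ hz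
  rw [ENNReal.ofReal_mul hC₀.le]
  exact hle.trans (by gcongr)

end ProjBddH

lemma IsRadialWeight.integrableOn_polarFun {g : ℝ → ℝ} (hg : IsRadialWeight g) {h : ℝ → ℂ}
    (hh : Measurable h) {H : ℝ} (hH : ∀ θ ∈ Ioc (-Real.pi) Real.pi, ‖h θ‖ ≤ H) :
    IntegrableOn (polarFun h g) unitDisc := by
  have h_radial : IntegrableOn (fun ζ : ℂ => (g ‖ζ‖ : ℂ)) unitDisc := by
    refine (integrableOn_fun_norm_addHaar (E := ℂ) volume (f := fun s => (g s : ℂ))).2 ?_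
    have hint := (intervalIntegrable_iff_integrableOn_Ioo_of_le zero_le_one).1
      (hg.intervalIntegrable_rpow_mul (a := 0) (b := 1) (by simp) (by simp) zero_le_one)
    simpa [finrank_real_complex, IntegrableOn] using hint.ofReal (𝕜 := ℂ)
  exact h_radial.bdd_mul (hh.comp measurable_arg).aestronglyMeasurable
    (Filter.Eventually.of_forall fun ζ => hH _ (arg_mem_Ioc ζ))

lemma IsRadialWeight.hasSum_bProj_polarFun {ω ν : ℝ → ℝ} (hω : IsRadialWeight ω)
    (hq : IsRadialWeight (quotTl ω ν)) {h : ℝ → ℂ} (hh : Measurable h) {H : ℝ}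
    (hH : ∀ θ ∈ Ioc (-Real.pi) Real.pi, ‖h θ‖ ≤ H) {z : ℂ} (hz : z ∈ unitDisc) :
    HasSum (fun n : ℕ => z ^ n *
      ((mom (quotTl ω ν) (n + 1) / mom ω (2 * n + 1) : ℝ) : ℂ) * angularCoeff h n)
      (bProj ω (polarFun h fun s => (tl ν s)⁻¹) z) := by
  have hint : IntegrableOn (fun ζ => polarFun h (fun s => (tl ν s)⁻¹) ζ * (ω ‖ζ‖ : ℂ))
      unitDisc := by
    simpa only [polarFun_inv_tl_mul] using hq.integrableOn_polarFun hh hH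
  refine (hω.hasSum_bProj hint hz).congr_fun fun n => ?_
  simp only [polarFun_inv_tl_mul, integral_polarFun_mul_conj_pow]
  have hmom := (hω.mom_pos (x := 2 * n + 1) (by positivity)).ne'
  push_cast
  field_simp [hmom, Real.pi_ne_zero]

/-! ### Test functions and their consequences -/

/-- The estimate obtained by testing `P_ω` on the unimodular monomials `e^{inθ} / ν̂`. -/
def MonomialTest (ω ν : ℝ → ℝ) : Prop :=
  ∃ C : ℝ, 0 < C ∧ ∀ (n : ℕ) (r : ℝ), 0 ≤ r → r < 1 →
    r ^ n * tl ν r * mom (quotTl ω ν) (n + 1) ≤ C * mom ω (2 * n + 1)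

/-- The estimate obtained by testing `P_ω` on the sawtooth `θ / ν̂`, whose Fourier coefficients are
of size `1 / n`. The term `n = 0` is `x / 0 = 0`. -/
def SawtoothTest (ω ν : ℝ → ℝ) : Prop :=
  ∃ C : ℝ, 0 < C ∧ ∀ (S : Finset ℕ) (r : ℝ), 0 ≤ r → r < 1 →
    (∑ n ∈ S, r ^ n * (mom (quotTl ω ν) (n + 1) / mom ω (2 * n + 1)) / n) * tl ν r ≤ C

section TestFunctions

variable {ω ν : ℝ → ℝ}

lemma ProjBddH.monomialTest (hb : ProjBddH ω (tl ν)) (hω : IsRadialWeight ω)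
    (hν : IsRadialWeight ν) : MonomialTest ω ν := by
  have hq := hb.isRadialWeight_quotTl hω hν
  obtain ⟨C, hC₀, hC⟩ := hb.exists_norm_bProj_polarFun_le hν
  refine ⟨C, hC₀, fun n r hr₀ hr₁ => ?_⟩
  have hz : (r : ℂ) ∈ unitDisc := mem_unitDisc.2 (by simpa [abs_of_nonneg hr₀] using hr₁)
  have hmeas : Measurable fun θ : ℝ => exp ((n : ℤ) * θ * I) := by fun_prop
  have hnorm : ∀ θ ∈ Ioc (-Real.pi) Real.pi, ‖exp ((n : ℤ) * θ * I)‖ ≤ 1 := fun θ _ => by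
    rw [show ((n : ℤ) : ℂ) * θ = ((n * θ : ℝ) : ℂ) by push_cast; rfl, norm_exp_ofReal_mul_I]
  have hqn : 0 < mom (quotTl ω ν) (n + 1) := hq.mom_pos (by positivity)
  have hωn : 0 < mom ω (2 * n + 1) := hω.mom_pos (by positivity)
  have hproj : bProj ω (polarFun (fun θ => exp ((n : ℤ) * θ * I)) fun s => (tl ν s)⁻¹) r =
      ((r ^ n * (mom (quotTl ω ν) (n + 1) / mom ω (2 * n + 1)) : ℝ) : ℂ) := by
    refine (hω.hasSum_bProj_polarFun hq hmeas hnorm hz).unique ?_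
    convert hasSum_single n fun m hm => ?_ using 1
    · rw [angularCoeff_exp, if_pos rfl, mul_one]
      push_cast
      rfl
    · rw [angularCoeff_exp, if_neg (Nat.cast_injective.ne hm), mul_zero]
  have hbound := hC _ 1 hmeas zero_le_one hnorm r hz
  rw [hproj, norm_real, norm_real, Real.norm_of_nonneg hr₀, Real.norm_of_nonneg (by positivity),
    mul_one, mul_div_assoc', div_mul_eq_mul_div, div_le_iff₀ hωn] at hbound
  linarith

lemma ProjBddH.sawtoothTest (hb : ProjBddH ω (tl ν)) (hω : IsRadialWeight ω)
    (hν : IsRadialWeight ν) : SawtoothTest ω ν := by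
  have hq := hb.isRadialWeight_quotTl hω hν
  obtain ⟨C, hC₀, hC⟩ := hb.exists_norm_bProj_polarFun_le hν
  refine ⟨C * Real.pi, mul_pos hC₀ Real.pi_pos, fun S r hr₀ hr₁ => ?_⟩
  have hz : (-r : ℂ) ∈ unitDisc := mem_unitDisc.2 (by simpa [abs_of_nonneg hr₀] using hr₁)
  have hnorm : ∀ θ ∈ Ioc (-Real.pi) Real.pi, ‖(θ : ℂ)‖ ≤ Real.pi := fun θ hθ => by
    rw [norm_real]
    exact abs_le.2 ⟨hθ.1.le, hθ.2⟩
  have hbound := hC _ _ measurable_ofReal Real.pi_pos.le hnorm (-r) hz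
  have hsum := hasSum_im (hω.hasSum_bProj_polarFun hq measurable_ofReal hnorm hz)
  -- At `z = -r` the sign `(-1) ^ n` of the `n`-th coefficient cancels, so all terms are positive.
  have hterm : ∀ n : ℕ, (-r : ℂ) ^ n *
      ((mom (quotTl ω ν) (n + 1) / mom ω (2 * n + 1) : ℝ) : ℂ) *
        angularCoeff (fun θ => (θ : ℂ)) n =
      ((r ^ n * (mom (quotTl ω ν) (n + 1) / mom ω (2 * n + 1)) / n : ℝ) : ℂ) * I := fun n => by
    have hsign : (-1 : ℂ) ^ n * (-1) ^ n = 1 := by rw [← mul_pow]; simp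
    rw [angularCoeff_ofReal, zpow_natCast, Int.cast_natCast, neg_pow]
    push_cast
    linear_combination (r : ℂ) ^ n * (mom (quotTl ω ν) (n + 1) / mom ω (2 * n + 1)) * I / n * hsign
  simp only [hterm, im_ofReal_mul, I_im, mul_one] at hsum
  have hpartial := sum_le_hasSum S (fun n _ => by
    have := (hq.mom_pos (x := n + 1) (by positivity)).le
    have := (hω.mom_pos (x := 2 * n + 1) (by positivity)).le
    positivity) hsum
  rw [norm_neg, norm_real, Real.norm_of_nonneg hr₀] at hbound
  refine le_trans ?_ hbound
  have hνr := (hν.tl_pos hr₀ hr₁).le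
  gcongr
  exact hpartial.trans ((le_abs_self _).trans (abs_im_le_norm _))

end TestFunctions

namespace IsRadialWeight

variable {ω ν : ℝ → ℝ}

lemma mom_add_le_mom_mul_mom_quotTl (hω : IsRadialWeight ω) (hν : IsRadialWeight ν)
    (hq : IsRadialWeight (quotTl ω ν)) {x y : ℝ} (hx : 0 ≤ x) (hy : 0 ≤ y) :
    mom ω (x + y) ≤ mom ν x * mom (quotTl ω ν) y := calc
  mom ω (x + y) ≤ ∫ s in (0 : ℝ)..1, mom ν x * (s ^ y * quotTl ω ν s) := by
      refine intervalIntegral.integral_mono_on_of_le_Ioo zero_le_one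
        (hω.intervalIntegrable_rpow_mul (by simp) (by simp) (add_nonneg hx hy))
        ((hq.intervalIntegrable_rpow_mul (by simp) (by simp) hy).const_mul _) fun s hs => ?_
      have htail : tl ν s ≠ 0 := (hν.tl_pos hs.1.le hs.2).ne'
      calc s ^ (x + y) * ω s = s ^ x * tl ν s * (s ^ y * quotTl ω ν s) := by
            rw [Real.rpow_add hs.1, quotTl]
            field_simp
        _ ≤ mom ν x * (s ^ y * quotTl ω ν s) :=
            mul_le_mul_of_nonneg_right (hν.rpow_mul_tl_le_mom hs.1.le hs.2.le hx)
              (mul_nonneg (Real.rpow_nonneg hs.1.le y) (hq.nonneg hs.1.le hs.2))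
  _ = mom ν x * mom (quotTl ω ν) y := intervalIntegral.integral_const_mul _ _

lemma rpow_mul_tl_le_tl_mul_mom_quotTl (hω : IsRadialWeight ω) (hν : IsRadialWeight ν)
    (hq : IsRadialWeight (quotTl ω ν)) {r x : ℝ} (hr₀ : 0 ≤ r) (hr₁ : r < 1) (hx : 0 ≤ x) :
    r ^ x * tl ω r ≤ tl ν r * mom (quotTl ω ν) x := calc
  r ^ x * tl ω r ≤ r ^ x * (tl ν r * tl (quotTl ω ν) r) :=
      mul_le_mul_of_nonneg_left (hω.tl_le_tl_mul_tl_quotTl hν hr₀ hr₁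
        (hq.intervalIntegrable ⟨hr₀, hr₁.le⟩ (by simp))) (Real.rpow_nonneg hr₀ x)
  _ = tl ν r * (r ^ x * tl (quotTl ω ν) r) := mul_left_comm _ _ _
  _ ≤ tl ν r * mom (quotTl ω ν) x :=
      mul_le_mul_of_nonneg_left (hq.rpow_mul_tl_le_mom hr₀ hr₁.le hx) (hν.tl_pos hr₀ hr₁).le

end IsRadialWeight

lemma AlmostDecreasingTailRatio.dhat {ω ν : ℝ → ℝ} (hratio : AlmostDecreasingTailRatio ω ν)
    (hdω : Dhat ω) (hω : IsRadialWeight ω) (hν : IsRadialWeight ν) : Dhat ν := by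
  obtain ⟨C, hC₀, hC⟩ := hratio
  obtain ⟨D, hD⟩ := hdω
  refine Dhat.of_half_le hν (C := C * D) fun r hr hr₁ => ?_
  have hmid : 0 < tl ω ((1 + r) / 2) := hω.tl_pos (by linarith) (by linarith)
  have hνmid : 0 < tl ν ((1 + r) / 2) := hν.tl_pos (by linarith) (by linarith)
  refine le_of_mul_le_mul_left ?_ hmid
  calc tl ω ((1 + r) / 2) * tl ν r ≤ C * (tl ω r * tl ν ((1 + r) / 2)) :=
        hC r _ hr (by linarith) (by linarith)
    _ ≤ C * (D * tl ω ((1 + r) / 2) * tl ν ((1 + r) / 2)) := by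
        gcongr
        exact hD r ⟨by linarith, hr₁⟩
    _ = tl ω ((1 + r) / 2) * (C * D * tl ν ((1 + r) / 2)) := by ring

lemma MonomialTest.almostDecreasingTailRatio {ω ν : ℝ → ℝ} (hmon : MonomialTest ω ν)
    (hdω : Dhat ω) (hω : IsRadialWeight ω) (hν : IsRadialWeight ν)
    (hq : IsRadialWeight (quotTl ω ν)) : AlmostDecreasingTailRatio ω ν := by
  obtain ⟨C, hC₀, hC⟩ := hmon
  obtain ⟨K, hK₀, hK⟩ := hdω.exists_mom_le_mul_tl_of_le hω 0
  set δ := Real.exp (-(2 * (5 / 2)))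
  refine ⟨C * K / δ ^ 2, by positivity, fun r t hr hrt ht => ?_⟩
  have hgap : 0 < 1 - r := by linarith
  obtain ⟨n, hn_lower, hn_upper⟩ : ∃ n : ℕ, 1 ≤ (1 - r) * n ∧ (n + 1) * (1 - r) ≤ 5 / 2 := by
    refine ⟨⌈1 / (1 - r)⌉₊, (div_le_iff₀' hgap).1 (Nat.le_ceil _), ?_⟩
    have hceil := mul_lt_mul_of_pos_right (Nat.ceil_lt_add_one (one_div_pos.2 hgap).le) hgap
    rw [add_mul, one_div_mul_cancel hgap.ne'] at hceil
    linarith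
  have hrn : δ ≤ r ^ n := by
    rw [← Real.rpow_natCast]
    exact exp_le_rpow hr (by linarith) (by positivity) (by linarith)
  have htn : δ ≤ t ^ (n + 1 : ℝ) :=
    exp_le_rpow (hr.trans hrt) ht.le (by positivity) (le_trans (by gcongr) hn_upper)
  have hωt : 0 < tl ω t := hω.tl_pos (by linarith) ht
  have hνr : 0 < tl ν r := hν.tl_pos (by linarith) (by linarith)
  have hνt : 0 < tl ν t := hν.tl_pos (by linarith) ht
  have htest : r ^ n * tl ν r * mom (quotTl ω ν) (n + 1) ≤ C * (K * tl ω r) :=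
    (hC n r (by linarith) (by linarith)).trans (by
      gcongr
      exact hK r _ (by linarith) (by linarith [n.cast_nonneg (α := ℝ)])
        (by nlinarith [n.cast_nonneg (α := ℝ)]))
  have hquot : t ^ (n + 1 : ℝ) * tl ω t ≤ tl ν t * mom (quotTl ω ν) (n + 1) :=
    hω.rpow_mul_tl_le_tl_mul_mom_quotTl hν hq (by linarith) ht (by positivity)
  rw [div_mul_eq_mul_div, le_div_iff₀' (by positivity)]
  calc δ ^ 2 * (tl ω t * tl ν r) = δ * tl ν r * (δ * tl ω t) := by ring
    _ ≤ r ^ n * tl ν r * (t ^ (n + 1 : ℝ) * tl ω t) := by gcongr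
    _ ≤ r ^ n * tl ν r * (tl ν t * mom (quotTl ω ν) (n + 1)) := by gcongr
    _ = r ^ n * tl ν r * mom (quotTl ω ν) (n + 1) * tl ν t := by ring
    _ ≤ C * (K * tl ω r) * tl ν t := by gcongr
    _ = C * K * (tl ω r * tl ν t) := by ring

lemma MonomialTest.dhat {ω ν : ℝ → ℝ} (hmon : MonomialTest ω ν) (hdν : Dhat ν)
    (hω : IsRadialWeight ω) (hν : IsRadialWeight ν) (hq : IsRadialWeight (quotTl ω ν)) :
    Dhat ω := by
  obtain ⟨C, hC₀, hC⟩ := hmon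
  obtain ⟨K, hK₀, hK⟩ := hdν.exists_mom_le_mul_tl_of_le hν 3
  set δ := Real.exp (-(2 * 1))
  have hδ : 0 < δ := Real.exp_pos _
  refine Dhat.of_mom_le hω (C := K * C / δ) (ε := 1 / 2) (x₀ := 16) one_half_pos
    fun x hx => ?_
  obtain ⟨n, hn_lower, hn_upper⟩ : ∃ n : ℕ, 3 / 4 * x ≤ n ∧ n ≤ 3 / 4 * x + 1 :=
    ⟨⌈3 / 4 * x⌉₊, Nat.le_ceil _, (Nat.ceil_lt_add_one (by linarith)).le⟩
  have hx_inv : 1 / x ≤ 1 / 16 := one_div_le_one_div_of_le (by norm_num) hx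
  have hx_inv_pos : 0 < 1 / x := one_div_pos.2 (by linarith)
  have hx_mul : 1 / x * x = 1 := one_div_mul_cancel (by linarith)
  have hqn : 0 < mom (quotTl ω ν) (n + 1) := hq.mom_pos (by positivity)
  have hνtail : 0 < tl ν (1 - 1 / x) := hν.tl_pos (by linarith) (by linarith)
  have hpow : δ ≤ (1 - 1 / x) ^ n := by
    rw [← Real.rpow_natCast]
    exact exp_le_rpow (by linarith) (by linarith) (by positivity) (by nlinarith)
  have hνmom : mom ν (x - (n + 1)) ≤ K * tl ν (1 - 1 / x) :=
    hK _ _ (by linarith) (by linarith) (by nlinarith)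
  have hω_le : mom ω x ≤ K * tl ν (1 - 1 / x) * mom (quotTl ω ν) (n + 1) := by
    have := hω.mom_add_le_mom_mul_mom_quotTl hν hq (x := x - (n + 1)) (y := n + 1) (by linarith)
      (by positivity)
    rw [sub_add_cancel] at this
    exact this.trans (by gcongr)
  rw [div_mul_eq_mul_div, le_div_iff₀' hδ]
  calc δ * mom ω x ≤ δ * (K * tl ν (1 - 1 / x) * mom (quotTl ω ν) (n + 1)) := by gcongr
    _ = K * (δ * tl ν (1 - 1 / x) * mom (quotTl ω ν) (n + 1)) := by ring
    _ ≤ K * ((1 - 1 / x) ^ n * tl ν (1 - 1 / x) * mom (quotTl ω ν) (n + 1)) := by gcongr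
    _ ≤ K * (C * mom ω (2 * n + 1)) :=
        mul_le_mul_of_nonneg_left (hC n _ (by linarith) (by linarith)) hK₀.le
    _ ≤ K * (C * mom ω (x + 1 / 2 * x)) := by
        gcongr
        exact hω.mom_antitone (by linarith) (by linarith)
    _ = K * C * mom ω (x + 1 / 2 * x) := by ring

lemma log_div_le_sum_Ico_inv {N M : ℕ} (hN : 0 < N) (hNM : N ≤ M) :
    Real.log (M / N) ≤ ∑ n ∈ Finset.Ico N M, (n : ℝ)⁻¹ := by
  have hN' : (0 : ℝ) < N := Nat.cast_pos.2 hN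
  rw [← integral_inv_of_pos hN' (hN'.trans_le (Nat.cast_le.2 hNM))]
  exact AntitoneOn.integral_le_sum_Ico hNM fun x hx y _ hxy => inv_anti₀ (hN'.trans_le hx.1) hxy

lemma log_le_sum_Ico_floor_ceil_inv {a b : ℝ} (ha : 1 ≤ a) (hab : a ≤ b) :
    Real.log (b / a) ≤ ∑ n ∈ Finset.Ico ⌊a⌋₊ ⌈b⌉₊, (n : ℝ)⁻¹ := by
  have ha₀ : 0 < a := one_pos.trans_le ha
  have hfloor : 0 < ⌊a⌋₊ := Nat.floor_pos.2 ha
  refine le_trans (Real.log_le_log (div_pos (ha₀.trans_le hab) ha₀) ?_)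
    (log_div_le_sum_Ico_inv hfloor ((Nat.floor_mono hab).trans (Nat.floor_le_ceil b)))
  exact div_le_div₀ (Nat.cast_nonneg _) (Nat.le_ceil b) (by exact_mod_cast hfloor)
    (Nat.floor_le ha₀.le)

lemma Dhat.exists_inv_tl_le_mom_quotTl_div_mom {ω ν : ℝ → ℝ} (hdν : Dhat ν)
    (hω : IsRadialWeight ω) (hν : IsRadialWeight ν) (hq : IsRadialWeight (quotTl ω ν)) :
    ∃ K, 0 < K ∧ ∀ (r : ℝ) (n : ℕ), 1 / 2 ≤ r → r < 1 → 1 / (1 - r) ≤ n + 1 →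
      (K * tl ν r)⁻¹ ≤ mom (quotTl ω ν) (n + 1) / mom ω (2 * n + 1) := by
  obtain ⟨K, hK₀, hK⟩ := hdν.exists_mom_le_mul_tl_of_le hν 1
  refine ⟨K, hK₀, fun r n hr hr₁ hn => ?_⟩
  have hgap : 0 < 1 - r := by linarith
  have hn_one : 1 ≤ (n : ℝ) := by
    have : 2 ≤ 1 / (1 - r) := (le_div_iff₀ hgap).2 (by linarith)
    linarith
  rw [div_le_iff₀ hgap] at hn
  have hνr : 0 < tl ν r := hν.tl_pos (by linarith) hr₁
  have hqn : 0 < mom (quotTl ω ν) (n + 1) := hq.mom_pos (by positivity)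
  have hmom : mom ω (2 * n + 1) ≤ K * tl ν r * mom (quotTl ω ν) (n + 1) := calc
    mom ω (2 * n + 1) = mom ω (n + (n + 1)) := by ring_nf
    _ ≤ mom ν n * mom (quotTl ω ν) (n + 1) :=
        hω.mom_add_le_mom_mul_mom_quotTl hν hq (by positivity) (by positivity)
    _ ≤ K * tl ν r * mom (quotTl ω ν) (n + 1) := by
        gcongr
        exact hK r n (by linarith) hn_one (by linarith)
  rw [le_div_iff₀ (hω.mom_pos (by positivity))]
  exact (inv_mul_le_iff₀ (by positivity)).2 hmom

lemma SawtoothTest.logDecay {ω ν : ℝ → ℝ} (hsaw : SawtoothTest ω ν) (hdν : Dhat ν)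
    (hω : IsRadialWeight ω) (hν : IsRadialWeight ν) (hq : IsRadialWeight (quotTl ω ν)) :
    LogDecay ν := by
  obtain ⟨C, hC₀, hC⟩ := hsaw
  obtain ⟨K, hK₀, hK⟩ := hdν.exists_inv_tl_le_mom_quotTl_div_mom hω hν hq
  set δ := Real.exp (-(2 * 1))
  have hδ : 0 < δ := Real.exp_pos _
  refine ⟨C * K / δ, by positivity, fun r t hr hrt ht => ?_⟩
  have hr₁ : r < 1 := hrt.trans_lt ht
  have hgap_r : 0 < 1 - r := sub_pos.2 hr₁
  have hgap_t : 0 < 1 - t := sub_pos.2 ht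
  have ht₀ : 0 < t := by linarith
  have hνr : 0 < tl ν r := hν.tl_pos (by linarith) hr₁
  have hνt : 0 < tl ν t := hν.tl_pos ht₀.le ht
  set S := Finset.Ico ⌊1 / (1 - r)⌋₊ ⌈1 / (1 - t)⌉₊
  have hterm : ∀ n ∈ S, δ * (K * tl ν r)⁻¹ / n ≤
      t ^ n * (mom (quotTl ω ν) (n + 1) / mom ω (2 * n + 1)) / n := fun n hn => by
    obtain ⟨hn_lower, hn_upper⟩ := Finset.mem_Ico.1 hn
    have hpow : δ ≤ t ^ n := by
      rw [← Real.rpow_natCast]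
      exact exp_le_rpow (hr.trans hrt) ht.le (by positivity)
        ((lt_div_iff₀ hgap_t).1 (Nat.lt_ceil.1 hn_upper)).le
    have hquot := hK r n hr hr₁ ((Nat.lt_floor_add_one _).le.trans (by gcongr))
    gcongr
  have hlog : Real.log ((1 - r) / (1 - t)) ≤ ∑ n ∈ S, (n : ℝ)⁻¹ := by
    have hfloor := log_le_sum_Ico_floor_ceil_inv (a := 1 / (1 - r)) (b := 1 / (1 - t))
      ((one_le_div hgap_r).2 (by linarith)) (by gcongr)
    rwa [div_div_div_cancel_left' _ _ one_ne_zero] at hfloor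
  have hbound : δ * (K * tl ν r)⁻¹ * Real.log ((1 - r) / (1 - t)) * tl ν t ≤ C := calc
    _ ≤ δ * (K * tl ν r)⁻¹ * (∑ n ∈ S, (n : ℝ)⁻¹) * tl ν t := by gcongr
    _ = (∑ n ∈ S, δ * (K * tl ν r)⁻¹ / n) * tl ν t := by simp only [Finset.mul_sum, div_eq_mul_inv]
    _ ≤ _ := mul_le_mul_of_nonneg_right (Finset.sum_le_sum hterm) hνt.le
    _ ≤ C := hC S t ht₀.le ht
  rw [div_mul_eq_mul_div, le_div_iff₀' hδ]
  calc δ * (Real.log ((1 - r) / (1 - t)) * tl ν t)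
      = δ * (K * tl ν r)⁻¹ * Real.log ((1 - r) / (1 - t)) * tl ν t * (K * tl ν r) := by
        field_simp
    _ ≤ C * (K * tl ν r) := by gcongr
    _ = C * K * tl ν r := (mul_assoc _ _ _).symm

/-- Corollary: if `P_ω : L^∞_ν̂ → H^∞_ν̂` is bounded and `ω ∈ D̂` or `ν ∈ D̂`,
then both `ω` and `ν` belong to `D`. -/
theorem stmt19 (ω ν : ℝ → ℝ) (hω : IsRadialWeight ω) (hν : IsRadialWeight ν)
    (hb : ProjBddH ω (tl ν)) (h : Dhat ω ∨ Dhat ν) :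
    DD ω ∧ DD ν := by
  have hq : IsRadialWeight (quotTl ω ν) := hb.isRadialWeight_quotTl hω hν
  have hmon : MonomialTest ω ν := hb.monomialTest hω hν
  have hdω : Dhat ω := h.elim id fun hdν => hmon.dhat hdν hω hν hq
  have hratio : AlmostDecreasingTailRatio ω ν := hmon.almostDecreasingTailRatio hdω hω hν hq
  have hdν : Dhat ν := hratio.dhat hdω hω hν
  have hlogν : LogDecay ν := (hb.sawtoothTest hω hν).logDecay hdν hω hν hq
  have hlogω : LogDecay ω := hlogν.of_almostDecreasingTailRatio hν hratio hω
  exact ⟨⟨hdω, hlogω.dcheck hω⟩, hdν, hlogν.dcheck hν⟩
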